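/- For every complex number z with Re(z) > 1, one has (1 − 2^{1−z})·ζ(z) = 1 + ∑_{r ∈ S} (−1)^{r−1}·( cosh(z·log r/2)/(2·sinh(z·log r/2)) − 1/2 ), where S is the set of integers r ≥ 2 that are not perfect powers. -/

import Mathlib

/-- The set of integers `r ≥ 2` that are not perfect powers, i.e. not of the form
`a ^ k` with `a ≥ 2` and `k ≥ 2`. -/
def nonPerfectPowers : Set ℕ :=
  {r | 2 ≤ r ∧ ¬ ∃ a k : ℕ, 2 ≤ a ∧ 2 ≤ k ∧ a ^ k = r}

/-!
Every integer `n ≥ 2` is `r ^ (k + 1)` for exactly one non-perfect-power `r` and one `k ≥ 0`.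
Since `n = 1` contributes `1`, grouping the terms of the alternating series
`∑ (-1) ^ (n + 1) * n ^ (-z) = (1 - 2 ^ (1 - z)) * ζ(z)` by `r` turns the rest into a sum of
geometric series of ratio `r ^ (-z) = exp (-2 * w)` with `w = z * log r / 2`, because all powers
of `r` have the parity of `r`. Such a series sums to `(coth w - 1) / 2`.
-/

section PerfectPowers

theorem eq_one_of_pow_mem_nonPerfectPowers {c m : ℕ} (h : c ^ m ∈ nonPerfectPowers) : m = 1 := by
  obtain ⟨two_le, not_power⟩ := h
  have hm : m ≠ 0 := by
    rintro rfl
    simp at two_le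
  have hc : 2 ≤ c := by
    by_contra! hc
    have : c ^ m ≤ 1 := pow_le_one₀ c.zero_le (by lia)
    lia
  by_contra hm'
  exact not_power ⟨c, m, hc, by lia, rfl⟩

theorem exists_mem_nonPerfectPowers_pow_succ_eq {n : ℕ} (hn : 2 ≤ n) :
    ∃ r ∈ nonPerfectPowers, ∃ k : ℕ, r ^ (k + 1) = n := by
  induction n using Nat.strong_induction_on with
  | _ n ih =>
    by_cases hpow : ∃ a k : ℕ, 2 ≤ a ∧ 2 ≤ k ∧ a ^ k = n
    · obtain ⟨a, k, ha, hk, rfl⟩ := hpow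
      obtain ⟨r, hr, j, rfl⟩ := ih a (lt_self_pow₀ ha hk) ha
      have hexp : 1 ≤ (j + 1) * k := Nat.mul_pos j.succ_pos (by lia)
      exact ⟨r, hr, (j + 1) * k - 1, by rw [Nat.sub_add_cancel hexp, pow_mul]⟩
    · exact ⟨n, ⟨hn, hpow⟩, 0, by simp⟩

theorem eq_and_eq_of_pow_eq_pow_of_mem_nonPerfectPowers {r s a b : ℕ}
    (hr : r ∈ nonPerfectPowers) (hs : s ∈ nonPerfectPowers) (ha : a ≠ 0) (h : r ^ a = s ^ b) :
    r = s ∧ a = b := by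
  obtain ⟨g, m, n, hg, hmn, rfl, rfl⟩ :=
    Nat.exists_coprime' (Nat.gcd_pos_of_pos_left b (Nat.pos_of_ne_zero ha))
  rw [pow_mul, pow_mul] at h
  have hpow : r ^ m = s ^ n := Nat.pow_left_injective hg.ne' h
  obtain ⟨c, rfl, rfl⟩ := Nat.exists_eq_pow_of_exponent_coprime_of_pow_eq_pow hmn hpow
  obtain rfl := eq_one_of_pow_mem_nonPerfectPowers hr
  obtain rfl := eq_one_of_pow_mem_nonPerfectPowers hs
  exact ⟨rfl, rfl⟩

/-- Unique representation of the integers `n ≥ 2` as powers of non-perfect-powers: the pair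
`(r, k)` corresponds to `r ^ (k + 1)`, the shift making every `k : ℕ` admissible. -/
noncomputable def nonPerfectPowersProdNatEquiv :
    nonPerfectPowers × ℕ ≃ {n : ℕ // 2 ≤ n} :=
  Equiv.ofBijective
    (fun p ↦ ⟨(p.1 : ℕ) ^ (p.2 + 1), p.1.2.1.trans (Nat.le_self_pow p.2.succ_ne_zero _)⟩) <| by
    constructor
    · rintro ⟨⟨r, hr⟩, a⟩ ⟨⟨s, hs⟩, b⟩ h
      obtain ⟨rfl, hab⟩ :=
        eq_and_eq_of_pow_eq_pow_of_mem_nonPerfectPowers hr hs a.succ_ne_zero (Subtype.ext_iff.mp h)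
      simpa using hab
    · rintro ⟨n, hn⟩
      obtain ⟨r, hr, k, rfl⟩ := exists_mem_nonPerfectPowers_pow_succ_eq hn
      exact ⟨(⟨r, hr⟩, k), rfl⟩

theorem hasSum_nonPerfectPowers {α : Type*} [AddCommGroup α] [TopologicalSpace α]
    [IsTopologicalAddGroup α] {f : ℕ → α} {g : nonPerfectPowers → α} {a : α} (hf : HasSum f a)
    (hg : ∀ r : nonPerfectPowers, HasSum (fun k : ℕ ↦ f ((r : ℕ) ^ (k + 1))) (g r)) :
    HasSum g (a - ∑ n ∈ Finset.range 2, f n) := by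
  have htail : HasSum (fun n : {n : ℕ // 2 ≤ n} ↦ f n) (a - ∑ n ∈ Finset.range 2, f n) :=
    (Equiv.subtypeEquivRight fun n ↦ by rw [Finset.mem_range, not_lt]).hasSum_iff.mpr <|
      (Finset.range 2).hasSum_compl_iff.mpr (by simpa using hf)
  exact (nonPerfectPowersProdNatEquiv.hasSum_iff.mpr htail).prod_fiberwise hg

end PerfectPowers

section AlternatingZeta

theorem hasSum_neg_one_pow_succ_mul {R : Type*} [Ring R] [TopologicalSpace R]
    [IsTopologicalRing R] {f : ℕ → R} {a b : R} (hf : HasSum f a)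
    (heven : HasSum (fun k ↦ f (2 * k)) b) :
    HasSum (fun n ↦ (-1) ^ (n + 1) * f n) (a - 2 * b) := by
  have heven' : HasSum (fun n ↦ if Even n then f n else 0) b := by
    rw [← add_zero b]
    apply HasSum.even_add_odd
    · simpa using heven
    · simp
  refine (hf.sub (heven'.mul_left 2)).congr_fun fun n ↦ ?_
  rcases n.even_or_odd with hn | hn
  · simp [hn, hn.add_one.neg_one_pow, two_mul]
  · simp [Nat.not_even_iff_odd.mpr hn, hn.add_one.neg_one_pow]

theorem hasSum_natCast_cpow_neg {z : ℂ} (hz : 1 < z.re) :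
    HasSum (fun n : ℕ ↦ (n : ℂ) ^ (-z)) (riemannZeta z) := by
  simpa only [zeta_eq_tsum_one_div_nat_cpow hz, Complex.cpow_neg, one_div]
    using (Complex.summable_one_div_nat_cpow.mpr hz).hasSum

theorem hasSum_alternating_zeta {z : ℂ} (hz : 1 < z.re) :
    HasSum (fun n : ℕ ↦ (-1) ^ (n + 1) * (n : ℂ) ^ (-z))
      ((1 - (2 : ℂ) ^ (1 - z)) * riemannZeta z) := by
  have hzeta := hasSum_natCast_cpow_neg hz
  have heven : HasSum (fun k : ℕ ↦ ((2 * k : ℕ) : ℂ) ^ (-z)) (2 ^ (-z) * riemannZeta z) :=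
    (hzeta.mul_left _).congr_fun fun k ↦ by
      rw [Nat.cast_mul, Complex.natCast_mul_natCast_cpow, Nat.cast_ofNat]
  have htwo : (2 : ℂ) ^ (1 - z) = 2 * 2 ^ (-z) := by
    rw [sub_eq_add_neg, Complex.cpow_add _ _ two_ne_zero, Complex.cpow_one]
  have hvalue : (1 - (2 : ℂ) ^ (1 - z)) * riemannZeta z =
      riemannZeta z - 2 * (2 ^ (-z) * riemannZeta z) := by
    rw [htwo]
    ring
  rw [hvalue]
  exact hasSum_neg_one_pow_succ_mul hzeta heven

end AlternatingZeta

section Coth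

open Complex

theorem exp_neg_two_mul_div_one_sub {w : ℂ} (hw : sinh w ≠ 0) :
    exp (-(2 * w)) / (1 - exp (-(2 * w))) = cosh w / (2 * sinh w) - 1 / 2 := by
  have hnum : exp (-(2 * w)) = exp (-w) * (cosh w - sinh w) := by
    rw [cosh_sub_sinh, ← exp_add]
    ring_nf
  have hden : 1 - exp (-(2 * w)) = exp (-w) * (2 * sinh w) := by
    rw [two_sinh, mul_sub, ← exp_add, ← exp_add, neg_add_cancel, exp_zero]
    ring_nf
  rw [hden, hnum, mul_div_mul_left _ _ (exp_ne_zero _)]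
  field_simp

theorem hasSum_exp_neg_two_mul_pow_succ {w : ℂ} (hw : 0 < w.re) :
    HasSum (fun k : ℕ ↦ exp (-(2 * w)) ^ (k + 1)) (cosh w / (2 * sinh w) - 1 / 2) := by
  have hnorm : ‖exp (-(2 * w))‖ < 1 := by
    simpa [norm_exp] using hw
  have hsinh : sinh w ≠ 0 := by
    intro h
    have hexp : exp w = exp (-w) := by
      rw [← sub_eq_zero, ← two_sinh, h, mul_zero]
    have hre : w.re = -w.re := by simpa [norm_exp] using congrArg norm hexp
    linarith
  rw [← exp_neg_two_mul_div_one_sub hsinh, div_eq_mul_inv]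
  simpa only [pow_succ'] using (hasSum_geometric_of_norm_lt_one hnorm).mul_left _

theorem hasSum_pow_succ_cpow_neg {x : ℝ} {z : ℂ} (hx : 1 < x) (hz : 0 < z.re) :
    HasSum (fun k : ℕ ↦ ((x : ℂ) ^ (k + 1)) ^ (-z))
      (cosh (z * Real.log x / 2) / (2 * sinh (z * Real.log x / 2)) - 1 / 2) := by
  have hre : 0 < (z * Real.log x / 2).re := by
    simpa using mul_pos hz (Real.log_pos hx)
  convert hasSum_exp_neg_two_mul_pow_succ hre using 2 with k
  rw [← ofReal_pow, cpow_def_of_ne_zero (by norm_cast; positivity), ← ofReal_log (by positivity),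
    Real.log_pow, ← exp_nat_mul]
  push_cast
  ring_nf

end Coth

theorem neg_one_pow_pow_add_one {R : Type*} [Monoid R] [HasDistribNeg R] {r k : ℕ} (hr : r ≠ 0)
    (hk : k ≠ 0) : (-1 : R) ^ (r ^ k + 1) = (-1) ^ (r - 1) := by
  apply neg_one_pow_congr
  grind

theorem one_sub_two_pow_mul_zeta_eq_alternating_tsum_coth
    (z : ℂ) (hz : 1 < z.re) :
    (1 - (2 : ℂ) ^ (1 - z)) * riemannZeta z =
      1 + ∑' r : nonPerfectPowers,
        (-1 : ℂ) ^ ((r : ℕ) - 1) *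
          (Complex.cosh (z * Real.log (r : ℕ) / 2) /
            (2 * Complex.sinh (z * Real.log (r : ℕ) / 2)) - 1 / 2) := by
  have hz_pos : 0 < z.re := one_pos.trans hz
  have hz_ne : z ≠ 0 := by
    rintro rfl
    simp at hz_pos
  have hpowers (r : nonPerfectPowers) :
      HasSum (fun k : ℕ ↦ (-1) ^ ((r : ℕ) ^ (k + 1) + 1) * (((r : ℕ) ^ (k + 1) : ℕ) : ℂ) ^ (-z))
        ((-1 : ℂ) ^ ((r : ℕ) - 1) * (Complex.cosh (z * Real.log (r : ℕ) / 2) /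
          (2 * Complex.sinh (z * Real.log (r : ℕ) / 2)) - 1 / 2)) := by
    have hr : 1 < (r : ℕ) := r.2.1
    simpa [neg_one_pow_pow_add_one (Nat.ne_zero_of_lt hr)] using
      (hasSum_pow_succ_cpow_neg (Nat.one_lt_cast.mpr hr) hz_pos).mul_left ((-1) ^ ((r : ℕ) - 1))
  have hsum := hasSum_nonPerfectPowers (hasSum_alternating_zeta hz) hpowers
  rw [hsum.tsum_eq]
  simp [Finset.sum_range_succ, hz_ne]
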